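/- For every projection game G, every ρ with 0 < ρ ≤ 1 such that val(G) ≤ ρ, and every positive integer k, the k-fold parallel repetition satisfies val(G^{⊗k}) ≤ (2√ρ/(1+ρ))^{k/2}. -/

import Mathlib

open Finset

/-- A projection game: finite nonempty question sets `Q1` (Alice) and `Q2` (Bob),
a finite nonempty alphabet `A`, and a probability mass function `μ` on triples
`(u, v, π)` where `π : A → Option A` encodes a projection constraint
(the answer pair `(α, β)` satisfies `π` iff `π β = some α`). -/
structure ProjGame where
  Q1 : Type
  Q2 : Type
  A : Type
  [fQ1 : Fintype Q1]
  [fQ2 : Fintype Q2]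
  [fA : Fintype A]
  [neQ1 : Nonempty Q1]
  [neQ2 : Nonempty Q2]
  [neA : Nonempty A]
  [dQ1 : DecidableEq Q1]
  [dQ2 : DecidableEq Q2]
  [dA : DecidableEq A]
  μ : Q1 × Q2 × (A → Option A) → ℝ
  μ_nonneg : ∀ x, 0 ≤ μ x
  μ_sum : ∑ x, μ x = 1

attribute [instance] ProjGame.fQ1 ProjGame.fQ2 ProjGame.fA
  ProjGame.neQ1 ProjGame.neQ2 ProjGame.neA ProjGame.dQ1 ProjGame.dQ2 ProjGame.dA

namespace ProjGame

variable (G : ProjGame)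

/-- The `U`-marginal (Alice-side marginal) of `μ`. -/
noncomputable def wU (u : G.Q1) : ℝ := ∑ v, ∑ π, G.μ (u, v, π)

/-- The `V`-marginal (Bob-side marginal) of `μ`. -/
noncomputable def wV (v : G.Q2) : ℝ := ∑ u, ∑ π, G.μ (u, v, π)

/-- The game operator: `(Gf)(u,α) = E_{(v,π)|u} [∑_{β : π β = some α} f (v,β)]`. -/
noncomputable def op (f : G.Q2 × G.A → ℝ) : G.Q1 × G.A → ℝ :=
  fun p =>
    (∑ v, ∑ π, G.μ (p.1, v, π) * ∑ β, if π β = some p.2 then f (v, β) else 0) / G.wU p.1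

/-- Squared norm on functions on `U × Σ`: `‖g‖² = E_u [∑_α g(u,α)²]`. -/
noncomputable def normUsq (g : G.Q1 × G.A → ℝ) : ℝ := ∑ u, G.wU u * ∑ α, (g (u, α)) ^ 2

/-- Squared norm on functions on `V × Σ`: `‖f‖² = E_v [∑_β f(v,β)²]`. -/
noncomputable def normVsq (f : G.Q2 × G.A → ℝ) : ℝ := ∑ v, G.wV v * ∑ β, (f (v, β)) ^ 2

/-- Inner product `⟨g, g'⟩ = E_u [∑_α g(u,α) g'(u,α)]`. -/
noncomputable def inn (g g' : G.Q1 × G.A → ℝ) : ℝ :=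
  ∑ u, G.wU u * ∑ α, g (u, α) * g' (u, α)

/-- An assignment for Bob. -/
def IsBob (f : G.Q2 × G.A → ℝ) : Prop := (∀ p, 0 ≤ f p) ∧ ∀ v, ∑ β, f (v, β) = 1

/-- An assignment for Alice. -/
def IsAlice (g : G.Q1 × G.A → ℝ) : Prop := (∀ p, 0 ≤ g p) ∧ ∀ u, ∑ α, g (u, α) = 1

/-- The value of the game: `val(G) = max ⟨g, Gf⟩` over assignments. -/
noncomputable def val : ℝ :=
  sSup { x | ∃ f g, G.IsBob f ∧ G.IsAlice g ∧ x = G.inn g (G.op f) }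

/-- The collision value `‖G‖ = max_f ‖Gf‖` over assignments `f` for Bob. -/
noncomputable def collVal : ℝ :=
  sSup { x | ∃ f, G.IsBob f ∧ x = Real.sqrt (G.normUsq (G.op f)) }

/-- Product of projection constraints. -/
def tensorC {A A' : Type} (π : A → Option A) (π' : A' → Option A') :
    A × A' → Option (A × A') :=
  fun b => (π b.1).bind fun a => (π' b.2).map fun a' => (a, a')

/-- The product (parallel repetition) of two projection games. -/
noncomputable def tensor (G H : ProjGame) : ProjGame where
  Q1 := G.Q1 × H.Q1
  Q2 := G.Q2 × H.Q2
  A := G.A × H.A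
  μ := fun x =>
    ∑ y : (G.Q1 × G.Q2 × (G.A → Option G.A)) × (H.Q1 × H.Q2 × (H.A → Option H.A)),
      if ((y.1.1, y.2.1), (y.1.2.1, y.2.2.1), tensorC y.1.2.2 y.2.2.2) = x
      then G.μ y.1 * H.μ y.2 else 0
  μ_nonneg := by
    intro x
    refine Finset.sum_nonneg fun y _ => ?_
    split
    · exact mul_nonneg (G.μ_nonneg _) (H.μ_nonneg _)
    · exact le_refl 0
  μ_sum := by
    rw [Finset.sum_comm]
    simp only [Finset.sum_ite_eq, Finset.mem_univ, if_true]
    rw [Fintype.sum_prod_type]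
    calc (∑ y1, ∑ y2, G.μ y1 * H.μ y2)
        = (∑ y1, G.μ y1) * (∑ y2, H.μ y2) := by rw [Finset.sum_mul_sum]
      _ = 1 := by rw [G.μ_sum, H.μ_sum, mul_one]

/-- `G.iterTensor k` is the `(k+1)`-fold parallel repetition `G^{⊗(k+1)}`. -/
noncomputable def iterTensor (G : ProjGame) : ℕ → ProjGame
  | 0 => G
  | n + 1 => G.tensor (G.iterTensor n)

/-- `val₊(G)`: supremum of values of vector assignments. -/
noncomputable def valPlus (G : ProjGame) : ℝ :=
  sSup { x | ∃ n : ℕ, 0 < n ∧ ∃ f : G.Q2 × G.A → Fin n → ℝ,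
    (∀ p i, 0 ≤ f p i) ∧
    (∀ v, Real.sqrt (∑ i, (∑ β, f (v, β) i) ^ 2) ≤ 1) ∧
    x = Real.sqrt (∑ u, G.wU u * ∑ α, ∑ i, (G.op (fun q => f q i) (u, α)) ^ 2) }

/-- `‖Th‖² = E_v [(∑_β h(v,β))²]`. -/
noncomputable def Tnormsq (G : ProjGame) (h : G.Q2 × G.A → ℝ) : ℝ :=
  ∑ v, G.wV v * (∑ β, h (v, β)) ^ 2

/-- `λ₊(G)`: supremum of `‖Gh‖/‖Th‖` over nonnegative `h` with `‖Th‖ > 0`. -/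
noncomputable def lambdaPlus (G : ProjGame) : ℝ :=
  sSup { x | ∃ h : G.Q2 × G.A → ℝ, (∀ p, 0 ≤ h p) ∧
    0 < Real.sqrt (G.Tnormsq h) ∧
    x = Real.sqrt (G.normUsq (G.op h)) / Real.sqrt (G.Tnormsq h) }

/-- The symmetrized distribution on `V × V` (with the constraints marginalized out). -/
noncomputable def msym (G : ProjGame) (v v' : G.Q2) : ℝ :=
  ∑ u, ((∑ π, G.μ (u, v, π)) * (∑ π', G.μ (u, v', π'))) / G.wU u

/-- `G` is `γ`-expanding: the Markov operator of the symmetrized constraint graph has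
spectral gap at least `γ`, i.e. `|⟨x, Ax⟩| ≤ (1-γ) E_v[x(v)²]` for mean-zero `x`. -/
def IsExpanding (G : ProjGame) (γ : ℝ) : Prop :=
  ∀ x : G.Q2 → ℝ, (∑ v, G.wV v * x v) = 0 →
    |∑ v, ∑ v', G.msym v v' * x v * x v'| ≤ (1 - γ) * ∑ v, G.wV v * (x v) ^ 2

/-- The symmetrized distribution on `(v, v', π, π')`. -/
noncomputable def msymFull (G : ProjGame) (v v' : G.Q2) (π π' : G.A → Option G.A) : ℝ :=
  ∑ u, (G.μ (u, v, π) * G.μ (u, v', π')) / G.wU u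

/-- The value of the assignment `x` in the symmetrized game `G_sym`. -/
noncomputable def symValAssign (G : ProjGame) (x : G.Q2 → G.A) : ℝ :=
  ∑ v, ∑ v', ∑ π, ∑ π', G.msymFull v v' π π' *
    (if ∃ α, π (x v) = some α ∧ π' (x v') = some α then 1 else 0)

/-- The value of the symmetrized game `G_sym`. -/
noncomputable def symVal (G : ProjGame) : ℝ :=
  sSup { r | ∃ x : G.Q2 → G.A, r = G.symValAssign x }

end ProjGame

/-!
Write `‖G‖ = collVal` for the largest `‖G f‖` over assignments `f` of Bob and `‖G‖₊ = valPlus` for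
its analogue over vector assignments, so that `val G ≤ ‖G‖ ≤ ‖G‖₊`. In a product game `G ⊗ H`,
fixing a question and an answer of Alice in `H` turns an assignment of Bob into one coordinate of a
vector assignment for `G`, whence `‖G ⊗ H‖ ≤ ‖G‖₊ ‖H‖` and `val (G^{⊗k}) ≤ ‖G‖₊ ^ k`.

It remains to see that `‖G‖₊² ≤ 2√ρ / (1 + ρ)`. Since `‖G f‖²` is the payoff of `f` when both
players of the symmetrized game use `f`, a vector assignment is compared with a scalar one obtained
by correlated sampling: question `v` takes the answers of coordinate `i` with probability
proportional to the `i`-th mass squared, and the same coordinate is taken at `v` and `v'` with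
probability at least the ratio of the sum of minima to the sum of maxima of these squares. The
rounded payoff is at most `val G ≤ ρ`. Cauchy–Schwarz bounds the vector payoff at `(v, v')` by
`2√x / (1 + x)` in terms of the rounded one `x`, and concavity of this function, used through its
tangent at `ρ`, gives the bound.
-/

namespace ParallelRepetition

open Matrix

section Kernel

variable {V A : Type*} [Fintype V] [Fintype A]

lemma exists_mem_stdSimplex_eq_sum_smul [Nonempty A] {p : A → ℝ} (hp : 0 ≤ p) :
    ∃ q ∈ stdSimplex ℝ A, p = (∑ a, p a) • q := by
  classical
  rcases (sum_nonneg fun a _ => hp a).eq_or_lt with h | h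
  · obtain ⟨a⟩ := ‹Nonempty A›
    have hp0 : p = 0 := (Fintype.sum_eq_zero_iff_of_nonneg hp).1 h.symm
    exact ⟨Pi.single a 1, single_mem_stdSimplex ℝ a, by simp [hp0]⟩
  · refine ⟨(∑ a, p a)⁻¹ • p, ⟨fun a => mul_nonneg (inv_nonneg.2 h.le) (hp a), ?_⟩, ?_⟩
    · simp only [Pi.smul_apply, smul_eq_mul, ← mul_sum, inv_mul_cancel₀ h.ne']
    · rw [smul_inv_smul₀ h.ne']

lemma dotProduct_mulVec_nonneg {M : Matrix A A ℝ} (hM : ∀ a b, 0 ≤ M a b) {p q : A → ℝ}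
    (hp : 0 ≤ p) (hq : 0 ≤ q) : 0 ≤ p ⬝ᵥ M *ᵥ q :=
  dotProduct_nonneg_of_nonneg hp fun a => dotProduct_nonneg_of_nonneg (hM a) hq

lemma dotProduct_mulVec_le {M : Matrix A A ℝ} {m : ℝ} (hM : ∀ a b, M a b ≤ m) {p q : A → ℝ}
    (hp : p ∈ stdSimplex ℝ A) (hq : q ∈ stdSimplex ℝ A) : p ⬝ᵥ M *ᵥ q ≤ m := by
  have hMq : ∀ a, (M *ᵥ q) a ≤ m := fun a =>
    (dotProduct_le_dotProduct_of_nonneg_right (hM a) hq.1).trans_eq (by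
      simp only [dotProduct, ← mul_sum, hq.2, mul_one])
  exact (dotProduct_le_dotProduct_of_nonneg_left hMq hp.1).trans_eq (by
    simp only [dotProduct, ← sum_mul, hp.2, one_mul])

/-- The payoff of the assignment `g`, one distribution over the answers `A` for each question in
`V`, in the two-player game in which both players use `g` and `W v v' a a'` is the payoff of the
answers `a`, `a'` to the questions `v`, `v'`, weighted by the probability of the questions. -/
def payoff (W : V → V → Matrix A A ℝ) (g : V → A → ℝ) : ℝ :=
  ∑ v, ∑ v', g v ⬝ᵥ W v v' *ᵥ g v'

lemma continuous_payoff (W : V → V → Matrix A A ℝ) : Continuous (payoff W) := by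
  unfold payoff
  fun_prop

end Kernel

section Threshold

lemma intervalIntegrable_indicator_Iic (x : ℝ) :
    IntervalIntegrable ((Set.Iic x).indicator (1 : ℝ → ℝ)) MeasureTheory.volume 0 1 := by
  refine Antitone.intervalIntegrable fun s t hst => ?_
  by_cases ht : t ≤ x
  · simp [ht, hst.trans ht]
  · rw [Set.indicator_of_notMem (Set.notMem_Iic.2 (not_le.1 ht))]
    exact Set.indicator_nonneg (fun _ _ => zero_le_one) s

lemma integral_indicator_Iic {x : ℝ} (hx : x ∈ Set.Icc 0 1) :
    ∫ t in (0 : ℝ)..1, (Set.Iic x).indicator (1 : ℝ → ℝ) t = x := by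
  have h := intervalIntegral.integral_indicator (f := (1 : ℝ → ℝ)) (μ := MeasureTheory.volume) hx
  exact h.trans (by simp)

lemma sum_mul_add_mul_one_sub_le_of_indicator {J : Type*} [Fintype J] {a b x y : J → ℝ} {R : ℝ}
    (hx : ∀ j, x j ∈ Set.Icc 0 1) (hy : ∀ j, y j ∈ Set.Icc 0 1)
    (h : ∀ t : ℝ, ∑ j, (a j * (Set.Iic (x j)).indicator 1 t
      + b j * (1 - (Set.Iic (y j)).indicator 1 t)) ≤ R) :
    ∑ j, (a j * x j + b j * (1 - y j)) ≤ R := by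
  have ha j := (intervalIntegrable_indicator_Iic (x j)).const_mul (a j)
  have hb' j := (intervalIntegrable_const (c := (1 : ℝ))).sub
    (intervalIntegrable_indicator_Iic (y j))
  have hb j := (hb' j).const_mul (b j)
  have hsum := IntervalIntegrable.sum univ fun j _ => (ha j).add (hb j)
  simp only [Finset.sum_fn] at hsum
  calc ∑ j, (a j * x j + b j * (1 - y j))
      = ∫ t in (0 : ℝ)..1, ∑ j, (a j * (Set.Iic (x j)).indicator 1 t
          + b j * (1 - (Set.Iic (y j)).indicator 1 t)) := by
        rw [intervalIntegral.integral_finsetSum fun j _ => (ha j).add (hb j)]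
        refine sum_congr rfl fun j _ => ?_
        rw [intervalIntegral.integral_add (ha j) (hb j), intervalIntegral.integral_const_mul,
          intervalIntegral.integral_const_mul, intervalIntegral.integral_sub
          intervalIntegrable_const (intervalIntegrable_indicator_Iic (y j)),
          integral_indicator_Iic (hx j), integral_indicator_Iic (hy j)]
        simp
    _ ≤ ∫ _ in (0 : ℝ)..1, R :=
        intervalIntegral.integral_mono zero_le_one hsum intervalIntegrable_const h
    _ = R := by simp

end Threshold

section Sampling

lemma exists_stdSimplex_forall_le {V A : Type*} [Fintype A] [Nonempty A]
    {φ : (V → A → ℝ) → ℝ} (hφ : Continuous φ) :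
    ∃ g : V → A → ℝ, (∀ v, g v ∈ stdSimplex ℝ A) ∧
      ∀ h : V → A → ℝ, (∀ v, h v ∈ stdSimplex ℝ A) → φ h ≤ φ g := by
  obtain ⟨g, hg, hmax⟩ := (isCompact_univ_pi fun _ : V => isCompact_stdSimplex ℝ A).exists_isMaxOn
    (Set.univ_pi_nonempty_iff.2 fun _ => Set.nonempty_coe_sort.1 inferInstance) hφ.continuousOn
  exact ⟨g, Set.mem_univ_pi.1 hg, fun h hh => hmax (Set.mem_univ_pi.2 hh)⟩

variable {V A ι : Type*} [Fintype V] [Fintype A] [Fintype ι]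
  {W : V → V → Matrix A A ℝ} {R : ℝ}

-- With a shared uniform threshold `t`, let question `v` switch from `g` to `f` iff `t ≤ x v`.
lemma sum_min_mul_add_one_sub_max_mul_le (hW : ∀ v v' a a', 0 ≤ W v v' a a')
    (hR : ∀ g : V → A → ℝ, (∀ v, g v ∈ stdSimplex ℝ A) → payoff W g ≤ R) {x : V → ℝ}
    (hx : ∀ v, x v ∈ Set.Icc 0 1) {f g : V → A → ℝ} (hf : ∀ v, f v ∈ stdSimplex ℝ A)
    (hg : ∀ v, g v ∈ stdSimplex ℝ A) :
    ∑ v, ∑ v', ((f v ⬝ᵥ W v v' *ᵥ f v') * min (x v) (x v')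
      + (g v ⬝ᵥ W v v' *ᵥ g v') * (1 - max (x v) (x v'))) ≤ R := by
  have hmin (p : V × V) : min (x p.1) (x p.2) ∈ Set.Icc (0 : ℝ) 1 :=
    ⟨le_min (hx _).1 (hx _).1, min_le_of_left_le (hx _).2⟩
  have hmax (p : V × V) : max (x p.1) (x p.2) ∈ Set.Icc (0 : ℝ) 1 :=
    ⟨le_max_of_le_left (hx _).1, max_le (hx _).2 (hx _).2⟩
  rw [← Fintype.sum_prod_type']
  refine sum_mul_add_mul_one_sub_le_of_indicator hmin hmax fun t => ?_
  set h : V → A → ℝ := fun v => if t ≤ x v then f v else g v with h_def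
  have hh (v : V) : h v ∈ stdSimplex ℝ A := by
    simp only [h_def]
    split
    exacts [hf v, hg v]
  refine le_trans ?_ (hR h hh)
  rw [Fintype.sum_prod_type]
  refine sum_le_sum fun v _ => sum_le_sum fun v' _ => ?_
  have hfg := dotProduct_mulVec_nonneg (hW v v') (hf v).1 (hg v').1
  have hgf := dotProduct_mulVec_nonneg (hW v v') (hg v).1 (hf v').1
  by_cases hv : t ≤ x v <;> by_cases hv' : t ≤ x v' <;> simp [h_def, hv, hv', hfg, hgf]

lemma sum_sum_min_add_card_sub_sum_max_le (hW : ∀ v v' a a', 0 ≤ W v v' a a')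
    (hR : ∀ g : V → A → ℝ, (∀ v, g v ∈ stdSimplex ℝ A) → payoff W g ≤ R) {x : ι → V → ℝ}
    (hx : ∀ i v, x i v ∈ Set.Icc 0 1) {f : ι → V → A → ℝ} (hf : ∀ i v, f i v ∈ stdSimplex ℝ A)
    {g : V → A → ℝ} (hg : ∀ v, g v ∈ stdSimplex ℝ A) :
    ∑ v, ∑ v', (∑ i, (f i v ⬝ᵥ W v v' *ᵥ f i v') * min (x i v) (x i v')
      + (g v ⬝ᵥ W v v' *ᵥ g v') * (Fintype.card ι - ∑ i, max (x i v) (x i v')))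
      ≤ Fintype.card ι * R := by
  have hsum := sum_le_sum fun i (_ : i ∈ univ) =>
    sum_min_mul_add_one_sub_max_mul_le hW hR (hx i) (hf i) hg
  rw [sum_const, card_univ, nsmul_eq_mul, sum_comm] at hsum
  refine le_of_eq_of_le (sum_congr rfl fun v _ => ?_) hsum
  rw [sum_comm]
  refine sum_congr rfl fun v' _ => ?_
  simp only [sum_add_distrib, ← mul_sum, sum_sub_distrib, sum_const, card_univ, nsmul_eq_mul,
    mul_one]

-- Apply threshold rounding to the payoff `U = W / Y`, `Y` being the sum of maxima, starting from
-- an assignment `g` maximizing `payoff U - payoff W / n`: rounding gains at most `R / n` over `g`.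
lemma sum_sum_min_div_sum_max_le [Nonempty A] [Nonempty ι] (hW : ∀ v v' a a', 0 ≤ W v v' a a')
    (hR : ∀ g : V → A → ℝ, (∀ v, g v ∈ stdSimplex ℝ A) → payoff W g ≤ R) {x : ι → V → ℝ}
    (hx : ∀ i v, x i v ∈ Set.Icc 0 1) {f : ι → V → A → ℝ} (hf : ∀ i v, f i v ∈ stdSimplex ℝ A) :
    ∑ v, ∑ v', (∑ i, (f i v ⬝ᵥ W v v' *ᵥ f i v') * min (x i v) (x i v'))
      / ∑ i, max (x i v) (x i v') ≤ R := by
  set Y : V → V → ℝ := fun v v' => ∑ i, max (x i v) (x i v')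
  set n : ℝ := (Fintype.card ι : ℝ)
  have hn : 0 < n := Nat.cast_pos.2 Fintype.card_pos
  have hY (v v' : V) : 0 ≤ Y v v' := sum_nonneg fun i _ => le_max_of_le_left (hx i v).1
  set U : V → V → Matrix A A ℝ := fun v v' => (Y v v')⁻¹ • W v v'
  have hU (v v' a a') : 0 ≤ U v v' a a' := mul_nonneg (inv_nonneg.2 (hY v v')) (hW v v' a a')
  have hU_eq (p q : A → ℝ) (v v' : V) : p ⬝ᵥ U v v' *ᵥ q = (p ⬝ᵥ W v v' *ᵥ q) / Y v v' := by
    rw [smul_mulVec, dotProduct_smul, smul_eq_mul, inv_mul_eq_div]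
  obtain ⟨g, hg, hmax⟩ := exists_stdSimplex_forall_le
    ((continuous_payoff U).sub ((continuous_payoff W).div_const n))
  have hU_le (h : V → A → ℝ) (hh : ∀ v, h v ∈ stdSimplex ℝ A) :
      payoff U h ≤ payoff U g - payoff W g / n + R / n := by
    have hgain : payoff U h - payoff W h / n ≤ payoff U g - payoff W g / n := hmax h hh
    linarith [div_le_div_of_nonneg_right (hR h hh) hn.le]
  have hY_cancel (v v' : V) : (g v ⬝ᵥ U v v' *ᵥ g v') * Y v v' ≤ g v ⬝ᵥ W v v' *ᵥ g v' := by
    rw [hU_eq, div_mul_eq_mul_div, mul_div_assoc]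
    exact mul_le_of_le_one_right (dotProduct_mulVec_nonneg (hW v v') (hg v).1 (hg v').1)
      (div_self_le_one _)
  have hround : ∑ v, ∑ v', (∑ i, (f i v ⬝ᵥ W v v' *ᵥ f i v') * min (x i v) (x i v')) / Y v v'
      + n * payoff U g - payoff W g ≤ n * (payoff U g - payoff W g / n + R / n) := by
    refine le_trans ?_ (sum_sum_min_add_card_sub_sum_max_le hU hU_le hx hf hg)
    simp only [payoff, mul_sum, ← sum_add_distrib, ← sum_sub_distrib]
    gcongr with v _ v' _
    have hf_eq : (∑ i, (f i v ⬝ᵥ W v v' *ᵥ f i v') * min (x i v) (x i v')) / Y v v'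
        = ∑ i, (f i v ⬝ᵥ U v v' *ᵥ f i v') * min (x i v) (x i v') := by
      simp only [hU_eq, sum_div, div_mul_eq_mul_div]
    linarith [hY_cancel v v']
  rw [mul_add, mul_sub, mul_div_cancel₀ _ hn.ne', mul_div_cancel₀ _ hn.ne'] at hround
  linarith

end Sampling

section Tangent

open Real

lemma two_mul_sqrt_div_one_add_le_tangent {ρ x : ℝ} (hρ0 : 0 < ρ) (hρ1 : ρ ≤ 1) (hx : 0 ≤ x) :
    2 * √x / (1 + x) ≤ 2 * √ρ / (1 + ρ) + (1 - ρ) / (√ρ * (1 + ρ) ^ 2) * (x - ρ) := by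
  obtain ⟨c, hc, rfl⟩ : ∃ c, 0 < c ∧ ρ = c ^ 2 := ⟨√ρ, sqrt_pos.2 hρ0, (sq_sqrt hρ0.le).symm⟩
  obtain ⟨s, hs, rfl⟩ : ∃ s, 0 ≤ s ∧ x = s ^ 2 := ⟨√x, sqrt_nonneg x, (sq_sqrt hx).symm⟩
  rw [sqrt_sq hc.le, sqrt_sq hs, ← sub_nonneg]
  have : 0 ≤ 1 - c ^ 2 := sub_nonneg.2 hρ1
  calc 0 ≤ (s - c) ^ 2 * ((1 - c ^ 2) * s ^ 2 + 2 * c * (1 - c ^ 2) * s + (1 + 3 * c ^ 2))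
        / (c * (1 + c ^ 2) ^ 2 * (1 + s ^ 2)) := by positivity
    _ = _ := by field_simp; ring

variable {ι : Type*} [Fintype ι]

lemma sum_mul_mul_le_two_mul_sqrt_div {a b C : ι → ℝ} (hC : ∀ i, C i ∈ Set.Icc 0 1)
    (ha : ∑ i, a i ^ 2 ≤ 1) (hb : ∑ i, b i ^ 2 ≤ 1) {r : ℝ}
    (hr : r = (∑ i, C i * min (a i ^ 2) (b i ^ 2)) / ∑ i, max (a i ^ 2) (b i ^ 2)) :
    ∑ i, a i * b i * C i ≤ 2 * √r / (1 + r) := by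
  set M := ∑ i, C i * min (a i ^ 2) (b i ^ 2) with hM
  set Y := ∑ i, max (a i ^ 2) (b i ^ 2) with hY
  have hmin0 (i : ι) : 0 ≤ min (a i ^ 2) (b i ^ 2) := le_min (sq_nonneg _) (sq_nonneg _)
  have hmax0 (i : ι) : 0 ≤ max (a i ^ 2) (b i ^ 2) := le_max_of_le_left (sq_nonneg _)
  have hM0 : 0 ≤ M := sum_nonneg fun i _ => mul_nonneg (hC i).1 (hmin0 i)
  have hY0 : 0 ≤ Y := sum_nonneg fun i _ => hmax0 i
  have hr0 : 0 ≤ r := hr ▸ div_nonneg hM0 hY0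
  have hM_le_Y : M ≤ Y := sum_le_sum fun i _ =>
    (mul_le_of_le_one_left (hmin0 i) (hC i).2).trans min_le_max
  have hMY : M + Y ≤ 2 := calc
    M + Y ≤ ∑ i, (min (a i ^ 2) (b i ^ 2) + max (a i ^ 2) (b i ^ 2)) := by
        rw [hM, hY, ← sum_add_distrib]
        gcongr with i
        exact mul_le_of_le_one_left (hmin0 i) (hC i).2
    _ = ∑ i, a i ^ 2 + ∑ i, b i ^ 2 := by simp only [min_add_max, sum_add_distrib]
    _ ≤ 2 := by linarith
  have hCS : (∑ i, a i * b i * C i) ^ 2 ≤ M * Y := by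
    refine sum_sq_le_sum_mul_sum_of_sq_le_mul _ (fun i _ => mul_nonneg (hC i).1 (hmin0 i))
      (fun i _ => hmax0 i) fun i _ => ?_
    calc (a i * b i * C i) ^ 2 = C i * (C i * (a i ^ 2 * b i ^ 2)) := by ring
      _ ≤ C i * (a i ^ 2 * b i ^ 2) :=
          mul_le_of_le_one_left (mul_nonneg (hC i).1 (by positivity)) (hC i).2
      _ = C i * min (a i ^ 2) (b i ^ 2) * max (a i ^ 2) (b i ^ 2) := by
          rw [mul_assoc, min_mul_max]
  have hMr : M = r * Y := by
    rw [hr, div_mul_cancel_of_imp fun h => le_antisymm (h ▸ hM_le_Y) hM0]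
  calc ∑ i, a i * b i * C i ≤ √r * Y := by
        refine le_of_sq_le_sq (hCS.trans_eq ?_) (by positivity)
        rw [mul_pow, sq_sqrt hr0, hMr]; ring
    _ ≤ 2 * √r / (1 + r) := by
        rw [le_div_iff₀ (by positivity), mul_assoc, mul_comm]
        gcongr
        linarith

lemma sum_mul_mul_le_tangent {a b K : ι → ℝ} {m ρ : ℝ} (hρ0 : 0 < ρ) (hρ1 : ρ ≤ 1)
    (hK : ∀ i, K i ∈ Set.Icc 0 m) (hm : 0 ≤ m)
    (ha : ∑ i, a i ^ 2 ≤ 1) (hb : ∑ i, b i ^ 2 ≤ 1) :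
    ∑ i, a i * b i * K i ≤ m * (2 * √ρ / (1 + ρ)) + (1 - ρ) / (√ρ * (1 + ρ) ^ 2) *
      ((∑ i, K i * min (a i ^ 2) (b i ^ 2)) / ∑ i, max (a i ^ 2) (b i ^ 2) - m * ρ) := by
  obtain ⟨C, hC, hKC⟩ : ∃ C : ι → ℝ, (∀ i, C i ∈ Set.Icc 0 1) ∧ ∀ i, K i = m * C i :=
    ⟨fun i => K i / m, fun i => ⟨div_nonneg (hK i).1 hm, div_le_one_of_le₀ (hK i).2 hm⟩,
      fun i => (mul_div_cancel_of_imp' fun h => le_antisymm (h ▸ (hK i).2) (hK i).1).symm⟩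
  set r := (∑ i, C i * min (a i ^ 2) (b i ^ 2)) / ∑ i, max (a i ^ 2) (b i ^ 2) with hr
  have hr0 : 0 ≤ r := div_nonneg
    (sum_nonneg fun i _ => mul_nonneg (hC i).1 (le_min (sq_nonneg _) (sq_nonneg _)))
    (sum_nonneg fun i _ => le_max_of_le_left (sq_nonneg _))
  calc ∑ i, a i * b i * K i = m * ∑ i, a i * b i * C i := by
        rw [mul_sum]
        exact sum_congr rfl fun i _ => by rw [hKC]; ring
    _ ≤ m * (2 * √ρ / (1 + ρ) + (1 - ρ) / (√ρ * (1 + ρ) ^ 2) * (r - ρ)) := by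
        gcongr
        exact (sum_mul_mul_le_two_mul_sqrt_div hC ha hb hr).trans
          (two_mul_sqrt_div_one_add_le_tangent hρ0 hρ1 hr0)
    _ = _ := by
        simp only [hKC, mul_assoc, ← mul_sum, mul_div_assoc, ← hr]
        ring

end Tangent

section VectorAssignment

variable {V A ι : Type*} [Fintype V] [Fintype A] [Fintype ι] [Nonempty A] [Nonempty ι]
  {W : V → V → Matrix A A ℝ} {m : V → V → ℝ} {ρ : ℝ}

theorem sum_payoff_le (hW : ∀ v v' a a', W v v' a a' ∈ Set.Icc 0 (m v v'))
    (hm : ∑ v, ∑ v', m v v' = 1) (hρ0 : 0 < ρ) (hρ1 : ρ ≤ 1)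
    (hρ : ∀ g : V → A → ℝ, (∀ v, g v ∈ stdSimplex ℝ A) → payoff W g ≤ ρ)
    {f : ι → V → A → ℝ} (hf0 : ∀ i v, 0 ≤ f i v) (hf1 : ∀ v, ∑ i, (∑ a, f i v a) ^ 2 ≤ 1) :
    ∑ i, payoff W (f i) ≤ 2 * √ρ / (1 + ρ) := by
  set F : ι → V → ℝ := fun i v => ∑ a, f i v a
  choose g hg hfg using fun i v => exists_mem_stdSimplex_eq_sum_smul (hf0 i v)
  have hF (i : ι) (v : V) : F i v ^ 2 ∈ Set.Icc 0 1 :=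
    ⟨sq_nonneg _, (single_le_sum (fun i _ => sq_nonneg (F i v)) (mem_univ i)).trans (hf1 v)⟩
  have hW0 (v v' a a') : 0 ≤ W v v' a a' := (hW v v' a a').1
  have hm0 (v v' : V) : 0 ≤ m v v' :=
    let a := Classical.arbitrary A
    (hW0 v v' a a).trans (hW v v' a a).2
  set K : ι → V → V → ℝ := fun i v v' => g i v ⬝ᵥ W v v' *ᵥ g i v'
  have hK (i : ι) (v v' : V) : K i v v' ∈ Set.Icc 0 (m v v') :=
    ⟨dotProduct_mulVec_nonneg (hW0 v v') (hg i v).1 (hg i v').1,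
      dotProduct_mulVec_le (fun a a' => (hW v v' a a').2) (hg i v) (hg i v')⟩
  set σ := (1 - ρ) / (√ρ * (1 + ρ) ^ 2)
  have hσ : 0 ≤ σ := div_nonneg (sub_nonneg.2 hρ1) (by positivity)
  set X : V → V → ℝ := fun v v' => (∑ i, K i v v' * min (F i v ^ 2) (F i v' ^ 2))
    / ∑ i, max (F i v ^ 2) (F i v' ^ 2)
  have hX : ∑ v, ∑ v', X v v' ≤ ρ := sum_sum_min_div_sum_max_le hW0 hρ hF hg
  calc ∑ i, payoff W (f i) = ∑ v, ∑ v', ∑ i, F i v * F i v' * K i v v' := by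
        simp only [payoff]
        rw [sum_comm]
        refine sum_congr rfl fun v _ => ?_
        rw [sum_comm]
        refine sum_congr rfl fun v' _ => sum_congr rfl fun i _ => ?_
        rw [hfg i v, hfg i v', mulVec_smul, smul_dotProduct, dotProduct_smul, smul_eq_mul,
          smul_eq_mul, ← mul_assoc]
    _ ≤ ∑ v, ∑ v', (m v v' * (2 * √ρ / (1 + ρ)) + σ * (X v v' - m v v' * ρ)) :=
        sum_le_sum fun v _ => sum_le_sum fun v' _ => sum_mul_mul_le_tangent hρ0 hρ1
          (fun i => hK i v v') (hm0 v v') (hf1 v) (hf1 v')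
    _ = 2 * √ρ / (1 + ρ) + σ * (∑ v, ∑ v', X v v' - ρ) := by
        simp only [sum_add_distrib, ← mul_sum, ← sum_mul, sum_sub_distrib, hm, one_mul]
    _ ≤ 2 * √ρ / (1 + ρ) :=
        add_le_of_nonpos_right (mul_nonpos_of_nonneg_of_nonpos hσ (sub_nonpos.2 hX))

end VectorAssignment

end ParallelRepetition

namespace ProjGame

open Matrix ParallelRepetition

variable (G H : ProjGame)

/-! ### The game operator -/

/-- The joint distribution of the questions to Alice and Bob. -/
noncomputable def wUV (u : G.Q1) (v : G.Q2) : ℝ := ∑ π, G.μ (u, v, π)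

lemma wUV_nonneg (u : G.Q1) (v : G.Q2) : 0 ≤ G.wUV u v := sum_nonneg fun _ _ => G.μ_nonneg _

lemma wU_nonneg (u : G.Q1) : 0 ≤ G.wU u := sum_nonneg fun v _ => G.wUV_nonneg u v

lemma sum_wU : ∑ u, G.wU u = 1 := by
  simp only [← G.μ_sum, Fintype.sum_prod_type, wU]

lemma sum_sum_msym : ∑ v, ∑ v', G.msym v v' = 1 := calc
  ∑ v, ∑ v', G.msym v v' = ∑ u, ∑ v, ∑ v', G.wUV u v * G.wUV u v' / G.wU u := by
    exact sum_comm_cycle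
  _ = ∑ u, G.wU u * G.wU u / G.wU u := by
    simp only [← sum_div, ← sum_mul_sum]
    rfl
  _ = 1 := by simp only [mul_self_div_self, sum_wU]

/-- The entry at `(α, β)` is the probability that the questions are `u`, `v` and that the
constraint projects Bob's answer `β` to Alice's answer `α`. -/
noncomputable def answerMatrix (u : G.Q1) (v : G.Q2) : Matrix G.A G.A ℝ :=
  Matrix.of fun α β => ∑ π, if π β = some α then G.μ (u, v, π) else 0

lemma answerMatrix_nonneg (u : G.Q1) (v : G.Q2) (α β : G.A) : 0 ≤ G.answerMatrix u v α β :=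
  sum_nonneg fun _ _ => ite_nonneg (G.μ_nonneg _) le_rfl

lemma sum_answerMatrix_le (u : G.Q1) (v : G.Q2) (β : G.A) :
    ∑ α, G.answerMatrix u v α β ≤ G.wUV u v := by
  simp only [answerMatrix, of_apply]
  rw [sum_comm]
  refine sum_le_sum fun π _ => ?_
  cases π β <;> simp [G.μ_nonneg]

lemma answerMatrix_le (u : G.Q1) (v : G.Q2) (α β : G.A) : G.answerMatrix u v α β ≤ G.wUV u v :=
  (single_le_sum (fun a _ => G.answerMatrix_nonneg u v a β) (mem_univ α)).trans
    (G.sum_answerMatrix_le u v β)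

/-- The entry at `(β, β')` is the probability of drawing `v`, `v'` from the symmetrized
distribution with constraints projecting `β` and `β'` to the same answer of Alice. -/
noncomputable def collisionMatrix (v v' : G.Q2) : Matrix G.A G.A ℝ :=
  ∑ u, (G.wU u)⁻¹ • ((G.answerMatrix u v)ᵀ * G.answerMatrix u v')

lemma collisionMatrix_mem_Icc (v v' : G.Q2) (β β' : G.A) :
    G.collisionMatrix v v' β β' ∈ Set.Icc 0 (G.msym v v') := by
  have happly : G.collisionMatrix v v' β β' =
      ∑ u, (∑ α, G.answerMatrix u v α β * G.answerMatrix u v' α β') / G.wU u := by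
    simp only [collisionMatrix, Matrix.sum_apply, Matrix.smul_apply, mul_apply, transpose_apply,
      smul_eq_mul, inv_mul_eq_div]
  rw [happly]
  refine ⟨sum_nonneg fun u _ => div_nonneg (sum_nonneg fun α _ => mul_nonneg
    (G.answerMatrix_nonneg u v α β) (G.answerMatrix_nonneg u v' α β')) (G.wU_nonneg u),
    sum_le_sum fun u _ => div_le_div_of_nonneg_right ?_ (G.wU_nonneg u)⟩
  calc ∑ α, G.answerMatrix u v α β * G.answerMatrix u v' α β'
      ≤ ∑ α, G.answerMatrix u v α β * G.wUV u v' := by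
        gcongr with α
        exacts [G.answerMatrix_nonneg u v α β, G.answerMatrix_le u v' α β']
    _ = (∑ α, G.answerMatrix u v α β) * G.wUV u v' := by rw [sum_mul]
    _ ≤ G.wUV u v * G.wUV u v' :=
        mul_le_mul_of_nonneg_right (G.sum_answerMatrix_le u v β) (G.wUV_nonneg u v')

lemma op_apply (f : G.Q2 × G.A → ℝ) (u : G.Q1) (α : G.A) :
    G.op f (u, α) = (∑ v, ∑ β, G.answerMatrix u v α β * f (v, β)) / G.wU u := by
  simp only [op, answerMatrix, of_apply, mul_sum, sum_mul, mul_ite, ite_mul, mul_zero, zero_mul]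
  rw [sum_congr rfl fun v _ => sum_comm]

lemma op_nonneg {f : G.Q2 × G.A → ℝ} (hf : ∀ q, 0 ≤ f q) (p : G.Q1 × G.A) : 0 ≤ G.op f p := by
  rw [← Prod.mk.eta (p := p), op_apply]
  exact div_nonneg (sum_nonneg fun v _ => sum_nonneg fun β _ =>
    mul_nonneg (G.answerMatrix_nonneg _ _ _ _) (hf _)) (G.wU_nonneg _)

lemma sum_op_le_one {f : G.Q2 × G.A → ℝ} (hf : G.IsBob f) (u : G.Q1) :
    ∑ α, G.op f (u, α) ≤ 1 := by
  simp only [op_apply]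
  rw [← sum_div]
  refine div_le_one_of_le₀ ?_ (G.wU_nonneg u)
  rw [sum_comm]
  refine sum_le_sum fun v _ => ?_
  calc ∑ α, ∑ β, G.answerMatrix u v α β * f (v, β)
      = ∑ β, (∑ α, G.answerMatrix u v α β) * f (v, β) := by
        rw [sum_comm]
        simp only [sum_mul]
    _ ≤ ∑ β, G.wUV u v * f (v, β) := by
        gcongr with β
        exacts [hf.1 _, G.sum_answerMatrix_le u v β]
    _ = G.wUV u v := by rw [← mul_sum, hf.2, mul_one]

lemma isLinearMap_op : IsLinearMap ℝ G.op where
  map_add f g := by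
    ext ⟨u, α⟩
    simp only [Pi.add_apply, op_apply, mul_add, sum_add_distrib, add_div]
  map_smul c f := by
    ext ⟨u, α⟩
    simp only [Pi.smul_apply, smul_eq_mul, op_apply, mul_left_comm _ c, ← mul_sum, mul_div_assoc]

lemma op_sum {ι : Type*} [Fintype ι] (f : ι → G.Q2 × G.A → ℝ) :
    G.op (∑ i, f i) = ∑ i, G.op (f i) :=
  map_sum (G.isLinearMap_op.mk' _) f univ

lemma normUsq_nonneg (g : G.Q1 × G.A → ℝ) : 0 ≤ G.normUsq g :=
  sum_nonneg fun u _ => mul_nonneg (G.wU_nonneg u) (sum_nonneg fun _ _ => sq_nonneg _)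

lemma normUsq_smul (c : ℝ) (g : G.Q1 × G.A → ℝ) : G.normUsq (c • g) = c ^ 2 * G.normUsq g := by
  simp only [normUsq, Pi.smul_apply, smul_eq_mul, mul_pow, mul_sum, mul_left_comm (c ^ 2)]

lemma normUsq_op (f : G.Q2 × G.A → ℝ) :
    G.normUsq (G.op f) = payoff G.collisionMatrix fun v β => f (v, β) := by
  set y : G.Q1 → G.Q2 → G.A → ℝ := fun u v => G.answerMatrix u v *ᵥ fun β => f (v, β) with hy
  calc G.normUsq (G.op f) = ∑ u, (G.wU u)⁻¹ * ((∑ v, y u v) ⬝ᵥ ∑ v, y u v) := by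
        refine sum_congr rfl fun u _ => ?_
        have hop (α : G.A) : G.op f (u, α) = (∑ v, y u v) α / G.wU u := by
          rw [op_apply, Finset.sum_apply]
          rfl
        simp only [hop, div_pow, ← sum_div, dotProduct, ← sq]
        rcases eq_or_ne (G.wU u) 0 with hu | hu
        · simp only [hu, zero_mul, _root_.inv_zero]
        · field_simp
    _ = payoff G.collisionMatrix fun v β => f (v, β) := by
        simp only [payoff, collisionMatrix, sum_mulVec, dotProduct_sum, smul_mulVec,
          dotProduct_smul, ← mulVec_mulVec, dotProduct_mulVec _ (_)ᵀ, vecMul_transpose,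
          sum_dotProduct, smul_eq_mul, hy, mul_sum]
        exact (sum_congr rfl fun u _ => sum_comm).trans sum_comm_cycle.symm

/-! ### Value and collision value -/

lemma inn_sq_le (g h : G.Q1 × G.A → ℝ) : G.inn g h ^ 2 ≤ G.normUsq g * G.normUsq h := by
  have hprod (k : G.Q1 × G.A → ℝ) : ∑ u, G.wU u * ∑ α, k (u, α) = ∑ p, G.wU p.1 * k p := by
    simp only [Fintype.sum_prod_type, mul_sum]
  simp only [inn, normUsq, hprod fun p => g p * h p, hprod fun p => g p ^ 2,
    hprod fun p => h p ^ 2]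
  refine sum_sq_le_sum_mul_sum_of_sq_le_mul _
    (fun p _ => mul_nonneg (G.wU_nonneg _) (sq_nonneg _))
    (fun p _ => mul_nonneg (G.wU_nonneg _) (sq_nonneg _)) fun p _ => ?_
  exact le_of_eq (by ring)

lemma normUsq_le_one {g : G.Q1 × G.A → ℝ} (hg0 : ∀ p, 0 ≤ g p)
    (hg1 : ∀ u, ∑ α, g (u, α) ≤ 1) : G.normUsq g ≤ 1 := by
  rw [← G.sum_wU]
  refine sum_le_sum fun u _ => mul_le_of_le_one_right (G.wU_nonneg u) ?_
  exact (sum_sq_le_sq_sum_of_nonneg fun α _ => hg0 _).trans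
    (pow_le_one₀ (sum_nonneg fun α _ => hg0 _) (hg1 u))

lemma normUsq_op_le_one {f : G.Q2 × G.A → ℝ} (hf : G.IsBob f) : G.normUsq (G.op f) ≤ 1 :=
  G.normUsq_le_one (G.op_nonneg hf.1) (G.sum_op_le_one hf)

lemma inn_le_sqrt_normUsq {g : G.Q1 × G.A → ℝ} (hg : G.IsAlice g) (h : G.Q1 × G.A → ℝ) :
    G.inn g h ≤ √(G.normUsq h) :=
  Real.le_sqrt_of_sq_le <| (G.inn_sq_le g h).trans <| mul_le_of_le_one_left (G.normUsq_nonneg h)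
    (G.normUsq_le_one hg.1 fun u => (hg.2 u).le)

lemma sqrt_normUsq_op_le_collVal {f : G.Q2 × G.A → ℝ} (hf : G.IsBob f) :
    √(G.normUsq (G.op f)) ≤ G.collVal := by
  refine le_csSup ⟨1, ?_⟩ ⟨f, hf, rfl⟩
  rintro _ ⟨f', hf', rfl⟩
  exact Real.sqrt_le_one.2 (G.normUsq_op_le_one hf')

lemma collVal_nonneg : 0 ≤ G.collVal := by
  refine Real.sSup_nonneg ?_
  rintro _ ⟨f, -, rfl⟩
  exact Real.sqrt_nonneg _

lemma val_le_collVal : G.val ≤ G.collVal := by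
  refine Real.sSup_le ?_ G.collVal_nonneg
  rintro _ ⟨f, g, hf, hg, rfl⟩
  exact (G.inn_le_sqrt_normUsq hg _).trans (G.sqrt_normUsq_op_le_collVal hf)

lemma inn_op_le_one {f : G.Q2 × G.A → ℝ} {g : G.Q1 × G.A → ℝ} (hf : G.IsBob f)
    (hg : G.IsAlice g) : G.inn g (G.op f) ≤ 1 :=
  (G.inn_le_sqrt_normUsq hg _).trans (Real.sqrt_le_one.2 (G.normUsq_op_le_one hf))

lemma val_le_one : G.val ≤ 1 := by
  refine Real.sSup_le ?_ zero_le_one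
  rintro _ ⟨f, g, hf, hg, rfl⟩
  exact G.inn_op_le_one hf hg

lemma inn_op_le_val {f : G.Q2 × G.A → ℝ} {g : G.Q1 × G.A → ℝ} (hf : G.IsBob f)
    (hg : G.IsAlice g) : G.inn g (G.op f) ≤ G.val := by
  refine le_csSup ⟨1, ?_⟩ ⟨f, g, hf, hg, rfl⟩
  rintro _ ⟨f', g', hf', hg', rfl⟩
  exact G.inn_op_le_one hf' hg'

lemma exists_isAlice_ge {g : G.Q1 × G.A → ℝ} (hg0 : ∀ p, 0 ≤ g p)
    (hg1 : ∀ u, ∑ α, g (u, α) ≤ 1) : ∃ g', G.IsAlice g' ∧ g ≤ g' := by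
  obtain ⟨a⟩ := G.neA
  have hle : g ≤ fun p => g p + if p.2 = a then 1 - ∑ α, g (p.1, α) else 0 := fun p =>
    le_add_of_nonneg_right (ite_nonneg (sub_nonneg.2 (hg1 p.1)) le_rfl)
  refine ⟨_, ⟨fun p => (hg0 p).trans (hle p), fun u => ?_⟩, hle⟩
  simp [sum_add_distrib]

lemma normUsq_op_le_val {f : G.Q2 × G.A → ℝ} (hf : G.IsBob f) :
    G.normUsq (G.op f) ≤ G.val := by
  obtain ⟨g, hg, hle⟩ := G.exists_isAlice_ge (G.op_nonneg hf.1) (G.sum_op_le_one hf)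
  refine le_trans ?_ (G.inn_op_le_val hf hg)
  refine sum_le_sum fun u _ => mul_le_mul_of_nonneg_left (sum_le_sum fun α _ => ?_) (G.wU_nonneg u)
  rw [sq]
  exact mul_le_mul_of_nonneg_right (hle _) (G.op_nonneg hf.1 _)

/-! ### Vector assignments -/

variable {ι : Type*} [Fintype ι]

/-- A vector assignment for Bob, as in the definition of `valPlus`, with its coordinates indexed
by a finite type `ι` and the coordinate as the first argument. -/
def IsVectorBob (f : ι → G.Q2 × G.A → ℝ) : Prop :=
  (∀ i q, 0 ≤ f i q) ∧ ∀ v, ∑ i, (∑ β, f i (v, β)) ^ 2 ≤ 1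

lemma sum_normUsq_op_le [Nonempty ι] {ρ : ℝ} (hρ0 : 0 < ρ) (hρ1 : ρ ≤ 1) (hval : G.val ≤ ρ)
    {f : ι → G.Q2 × G.A → ℝ} (hf : G.IsVectorBob f) :
    ∑ i, G.normUsq (G.op (f i)) ≤ 2 * √ρ / (1 + ρ) := by
  simp only [normUsq_op]
  refine sum_payoff_le G.collisionMatrix_mem_Icc G.sum_sum_msym hρ0 hρ1 (fun g hg => ?_)
    (fun i v β => hf.1 i (v, β)) hf.2
  have hBob : G.IsBob fun q => g q.1 q.2 := ⟨fun q => (hg q.1).1 q.2, fun v => (hg v).2⟩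
  rw [← G.normUsq_op fun q => g q.1 q.2]
  exact (G.normUsq_op_le_val hBob).trans hval

lemma valPlus_eq_sSup : G.valPlus = sSup {x | ∃ n : ℕ, 0 < n ∧ ∃ f : Fin n → G.Q2 × G.A → ℝ,
    G.IsVectorBob f ∧ x = √(∑ i, G.normUsq (G.op (f i)))} := by
  have hnorm {n : ℕ} (g : Fin n → G.Q1 × G.A → ℝ) :
      ∑ u, G.wU u * ∑ α, ∑ i, g i (u, α) ^ 2 = ∑ i, G.normUsq (g i) := by
    simp only [normUsq]
    rw [sum_comm]
    simp only [← mul_sum]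
    rw [sum_congr rfl fun u _ => by rw [sum_comm]]
  simp only [valPlus, hnorm fun _ => G.op fun _ => _, Real.sqrt_le_one]
  congr with x
  constructor
  · rintro ⟨n, hn, f, hf0, hf1, rfl⟩
    exact ⟨n, hn, fun i q => f q i, ⟨fun i q => hf0 q i, hf1⟩, rfl⟩
  · rintro ⟨n, hn, f, hf, rfl⟩
    exact ⟨n, hn, fun q i => f i q, fun q i => hf.1 i q, hf.2, rfl⟩

lemma valPlus_nonneg : 0 ≤ G.valPlus := by
  rw [valPlus_eq_sSup]
  refine Real.sSup_nonneg ?_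
  rintro _ ⟨n, -, f, -, rfl⟩
  exact Real.sqrt_nonneg _

theorem valPlus_le_sqrt {ρ : ℝ} (hρ0 : 0 < ρ) (hρ1 : ρ ≤ 1) (hval : G.val ≤ ρ) :
    G.valPlus ≤ √(2 * √ρ / (1 + ρ)) := by
  rw [valPlus_eq_sSup]
  refine Real.sSup_le ?_ (Real.sqrt_nonneg _)
  rintro _ ⟨n, hn, f, hf, rfl⟩
  have : NeZero n := ⟨hn.ne'⟩
  exact Real.sqrt_le_sqrt (G.sum_normUsq_op_le hρ0 hρ1 hval hf)

lemma sqrt_sum_normUsq_op_le_valPlus [Nonempty ι] {f : ι → G.Q2 × G.A → ℝ}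
    (hf : G.IsVectorBob f) : √(∑ i, G.normUsq (G.op (f i))) ≤ G.valPlus := by
  rw [valPlus_eq_sSup]
  let e := Fintype.equivFin ι
  refine le_csSup ⟨√(2 * √1 / (1 + 1)), ?_⟩ ⟨Fintype.card ι, Fintype.card_pos,
    fun i => f (e.symm i), ⟨fun i => hf.1 _, fun v => ?_⟩, ?_⟩
  · rintro _ ⟨n, hn, f', hf', rfl⟩
    have : NeZero n := ⟨hn.ne'⟩
    exact Real.sqrt_le_sqrt (G.sum_normUsq_op_le one_pos le_rfl G.val_le_one hf')
  · rw [e.symm.sum_comp fun i => (∑ β, f i (v, β)) ^ 2]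
    exact hf.2 v
  · rw [e.symm.sum_comp fun i => G.normUsq (G.op (f i))]

lemma sqrt_sum_mul_normUsq_op_le [Nonempty ι] {w : ι → ℝ} (hw : ∀ i, 0 ≤ w i) {c : ℝ} (hc : 0 < c)
    {f : ι → G.Q2 × G.A → ℝ} (hf0 : ∀ i q, 0 ≤ f i q)
    (hf1 : ∀ v, ∑ i, w i * (∑ β, f i (v, β)) ^ 2 ≤ c ^ 2) :
    √(∑ i, w i * G.normUsq (G.op (f i))) ≤ G.valPlus * c := by
  have hscale (i : ι) : (√(w i) / c) ^ 2 = w i / c ^ 2 := by rw [div_pow, Real.sq_sqrt (hw i)]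
  have hBob : G.IsVectorBob fun i => (√(w i) / c) • f i := by
    refine ⟨fun _ _ => mul_nonneg (by positivity) (hf0 _ _), fun v => ?_⟩
    simp only [Pi.smul_apply, smul_eq_mul, ← mul_sum, mul_pow, hscale]
    simp only [div_mul_eq_mul_div, ← sum_div]
    exact div_le_one_of_le₀ (hf1 v) (sq_nonneg c)
  have h := G.sqrt_sum_normUsq_op_le_valPlus hBob
  simp only [G.isLinearMap_op.map_smul, normUsq_smul, hscale, div_mul_eq_mul_div, ← sum_div] at h
  rwa [Real.sqrt_div' _ (sq_nonneg c), Real.sqrt_sq hc.le, div_le_iff₀ hc] at h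

lemma collVal_le_valPlus : G.collVal ≤ G.valPlus := by
  refine Real.sSup_le ?_ G.valPlus_nonneg
  rintro _ ⟨f, hf, rfl⟩
  have hVec : G.IsVectorBob fun _ : Unit => f := ⟨fun _ => hf.1, fun v => by simp [hf.2 v]⟩
  simpa using G.sqrt_sum_normUsq_op_le_valPlus hVec

/-! ### Product games -/

lemma tensorC_eq_some_iff {A B : Type} {π : A → Option A} {π' : B → Option B} {β α : A}
    {β' α' : B} : tensorC π π' (β, β') = some (α, α') ↔ π β = some α ∧ π' β' = some α' := by
  unfold tensorC
  cases π β <;> cases π' β' <;> simp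

lemma sum_tensor_μ_mul (u : G.Q1) (u' : H.Q1) (v : G.Q2) (v' : H.Q2)
    (X : (G.A × H.A → Option (G.A × H.A)) → ℝ) :
    ∑ π : G.A × H.A → Option (G.A × H.A), (G.tensor H).μ ((u, u'), (v, v'), π) * X π
      = ∑ π, ∑ π', G.μ (u, v, π) * H.μ (u', v', π') * X (tensorC π π') := by
  simp only [tensor, sum_mul]
  rw [sum_comm]
  simp only [Fintype.sum_prod_type, Prod.mk.injEq, ite_and, ite_mul, zero_mul, sum_ite_eq,
    sum_ite_eq', sum_ite_irrel, sum_const_zero, mem_univ, if_true]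

lemma answerMatrix_tensor (u : G.Q1) (u' : H.Q1) (v : G.Q2) (v' : H.Q2) (α β : G.A)
    (α' β' : H.A) : (G.tensor H).answerMatrix (u, u') (v, v') (α, α') (β, β')
      = G.answerMatrix u v α β * H.answerMatrix u' v' α' β' := by
  have h := G.sum_tensor_μ_mul H u u' v v' fun π => if π (β, β') = some (α, α') then 1 else 0
  simp only [mul_ite, mul_one, mul_zero, tensorC_eq_some_iff, ite_and] at h
  refine h.trans ?_
  simp only [answerMatrix, of_apply, sum_mul_sum, ite_zero_mul_ite_zero, ite_and]

lemma wU_tensor (u : G.Q1) (u' : H.Q1) : (G.tensor H).wU (u, u') = G.wU u * H.wU u' := by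
  have hwUV (v : G.Q2) (v' : H.Q2) :
      (G.tensor H).wUV (u, u') (v, v') = G.wUV u v * H.wUV u' v' := by
    have h := G.sum_tensor_μ_mul H u u' v v' 1
    simp only [Pi.one_apply, mul_one, ← sum_mul_sum] at h
    exact h
  calc (G.tensor H).wU (u, u') = ∑ v, ∑ v', (G.tensor H).wUV (u, u') (v, v') :=
        Fintype.sum_prod_type _
    _ = G.wU u * H.wU u' := by
        simp only [hwUV, ← sum_mul_sum]
        rfl

lemma op_tensor (f : (G.Q2 × H.Q2) × (G.A × H.A) → ℝ) (u : G.Q1) (u' : H.Q1) (α : G.A)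
    (α' : H.A) : (G.tensor H).op f ((u, u'), (α, α'))
      = G.op (fun p => H.op (fun q => f ((p.1, q.1), (p.2, q.2))) (u', α')) (u, α) := by
  have hsum : ∑ v : G.Q2 × H.Q2, ∑ β : G.A × H.A,
      (G.tensor H).answerMatrix (u, u') v (α, α') β * f (v, β) = ∑ v, ∑ β, G.answerMatrix u v α β *
        ∑ v', ∑ β', H.answerMatrix u' v' α' β' * f ((v, v'), (β, β')) := by
    simp only [Fintype.sum_prod_type, answerMatrix_tensor, mul_sum, mul_assoc]
    exact sum_congr rfl fun v _ => sum_comm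
  calc (G.tensor H).op f ((u, u'), (α, α'))
      = (∑ v : G.Q2 × H.Q2, ∑ β : G.A × H.A,
          (G.tensor H).answerMatrix (u, u') v (α, α') β * f (v, β)) / (G.wU u * H.wU u') :=
        ((G.tensor H).op_apply f (u, u') (α, α')).trans (congrArg _ (wU_tensor G H u u'))
    _ = _ := by
        simp only [hsum, op_apply, mul_div_assoc', ← sum_div, div_div, mul_comm (H.wU u')]

lemma normUsq_op_tensor (f : (G.Q2 × H.Q2) × (G.A × H.A) → ℝ) :
    (G.tensor H).normUsq ((G.tensor H).op f) = ∑ i : H.Q1 × H.A, H.wU i.1 *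
      G.normUsq (G.op fun p => H.op (fun q => f ((p.1, q.1), (p.2, q.2))) i) := by
  set F : H.Q1 × H.A → G.Q2 × G.A → ℝ :=
    fun i p => H.op (fun q => f ((p.1, q.1), (p.2, q.2))) i
  have hop (u : G.Q1) (u' : H.Q1) : ∑ α : G.A × H.A, (G.tensor H).op f ((u, u'), α) ^ 2
      = ∑ α', ∑ α, G.op (F (u', α')) (u, α) ^ 2 := by
    simp only [Fintype.sum_prod_type, op_tensor, F]
    exact sum_comm
  calc (G.tensor H).normUsq ((G.tensor H).op f)
      = ∑ u, ∑ u', (G.tensor H).wU (u, u') *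
          ∑ α : G.A × H.A, (G.tensor H).op f ((u, u'), α) ^ 2 := Fintype.sum_prod_type _
    _ = ∑ u' : H.Q1, ∑ α' : H.A, ∑ u, H.wU u' * (G.wU u * ∑ α, G.op (F (u', α')) (u, α) ^ 2) := by
        simp only [wU_tensor, hop, mul_sum, mul_left_comm (H.wU _), mul_assoc]
        exact sum_comm_cycle.symm
    _ = ∑ i : H.Q1 × H.A, H.wU i.1 * G.normUsq (G.op (F i)) := by
        simp only [Fintype.sum_prod_type, normUsq, mul_sum]

lemma sqrt_normUsq_op_tensor_le {f : (G.Q2 × H.Q2) × (G.A × H.A) → ℝ} (hf : (G.tensor H).IsBob f)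
    {c : ℝ} (hc : H.collVal < c) :
    √((G.tensor H).normUsq ((G.tensor H).op f)) ≤ G.valPlus * c := by
  have hc0 : 0 < c := H.collVal_nonneg.trans_lt hc
  have hf0 (p : (G.Q2 × H.Q2) × (G.A × H.A)) : 0 ≤ f p := hf.1 p
  have hf1 (v : G.Q2 × H.Q2) : ∑ β : G.A × H.A, f (v, β) = 1 := hf.2 v
  have hBob (v : G.Q2) : H.IsBob (∑ β : G.A, fun q => f ((v, q.1), (β, q.2))) := by
    refine ⟨fun q => ?_, fun v' => ?_⟩
    · rw [Finset.sum_apply]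
      exact sum_nonneg fun β _ => hf0 _
    · simp only [Finset.sum_apply]
      rw [sum_comm, ← hf1 (v, v'), Fintype.sum_prod_type]
  have hmarginal (v : G.Q2) : ∑ i : H.Q1 × H.A, H.wU i.1 *
      (∑ β, H.op (fun q => f ((v, q.1), (β, q.2))) i) ^ 2 ≤ c ^ 2 := calc
    _ = H.normUsq (H.op (∑ β : G.A, fun q => f ((v, q.1), (β, q.2)))) := by
        simp only [op_sum, normUsq, Finset.sum_apply, Fintype.sum_prod_type, mul_sum]
    _ ≤ c ^ 2 :=
        (Real.sqrt_le_left hc0.le).1 ((H.sqrt_normUsq_op_le_collVal (hBob v)).trans hc.le)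
  rw [normUsq_op_tensor]
  exact G.sqrt_sum_mul_normUsq_op_le (w := fun i : H.Q1 × H.A => H.wU i.1)
    (fun i => H.wU_nonneg i.1) hc0 (fun i p => H.op_nonneg (fun q => hf0 _) i) hmarginal

theorem collVal_tensor_le : (G.tensor H).collVal ≤ G.valPlus * H.collVal := by
  refine le_mul_of_forall_lt₀ fun a ha c hc => ?_
  have hc0 : 0 ≤ c := H.collVal_nonneg.trans hc.le
  refine Real.sSup_le ?_ (mul_nonneg (G.valPlus_nonneg.trans ha.le) hc0)
  rintro _ ⟨f, hf, rfl⟩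
  exact (G.sqrt_normUsq_op_tensor_le H hf hc).trans (mul_le_mul_of_nonneg_right ha.le hc0)

theorem collVal_iterTensor_le (n : ℕ) : (G.iterTensor n).collVal ≤ G.valPlus ^ (n + 1) := by
  induction n with
  | zero => simpa [iterTensor] using G.collVal_le_valPlus
  | succ n ih =>
    calc (G.iterTensor (n + 1)).collVal ≤ G.valPlus * (G.iterTensor n).collVal :=
          G.collVal_tensor_le _
      _ ≤ G.valPlus * G.valPlus ^ (n + 1) := mul_le_mul_of_nonneg_left ih G.valPlus_nonneg
      _ = G.valPlus ^ (n + 1 + 1) := (pow_succ' _ _).symm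

end ProjGame

/-- **Parallel Repetition Bound.** For every projection game `G` with `val(G) ≤ ρ`
(`0 < ρ ≤ 1`) and every positive integer `k`, the `k`-fold parallel repetition
satisfies `val(G^{⊗k}) ≤ (2√ρ/(1+ρ))^{k/2}`. -/
theorem parallel_repetition_bound (G : ProjGame) (ρ : ℝ) (hρ0 : 0 < ρ) (hρ1 : ρ ≤ 1)
    (hval : G.val ≤ ρ) (k : ℕ) (hk : 0 < k) :
    (G.iterTensor (k - 1)).val ≤ (2 * Real.sqrt ρ / (1 + ρ)) ^ ((k : ℝ) / 2) := by
  calc (G.iterTensor (k - 1)).val ≤ (G.iterTensor (k - 1)).collVal :=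
        (G.iterTensor (k - 1)).val_le_collVal
    _ ≤ G.valPlus ^ k := by simpa only [Nat.sub_add_cancel hk] using G.collVal_iterTensor_le (k - 1)
    _ ≤ √(2 * √ρ / (1 + ρ)) ^ k :=
        pow_le_pow_left₀ G.valPlus_nonneg (G.valPlus_le_sqrt hρ0 hρ1 hval) k
    _ = (2 * √ρ / (1 + ρ)) ^ ((k : ℝ) / 2) := by
        rw [Real.sqrt_eq_rpow, ← Real.rpow_natCast, ← Real.rpow_mul (by positivity),
          one_div_mul_eq_div]
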